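/- Let g and h be integers with g ≥ h ≥ 2. There exists a constant C = C(g,h) > 0 such that every infinite C_h[g] set A of positive integers satisfies liminf_{x→∞} A(x) · (x log x)^{1/h} / x ≤ C; equivalently, there are infinitely many positive integers x with A(x) ≤ C · x^{1-1/h} · (log x)^{-1/h}. -/

import Mathlib

/-!
Cut `(0, N ^ h]` into blocks of length `N`. Every `h`-subset of a block is a translate of one of
at most `N ^ (h - 1)` subsets of `[0, N)` with least element `0`, and a `C_h[g]` set contains fewer
than `g` translates of each, so the block counts `D_l` of `A` satisfy
`∑ D_l ^ h = O(N ^ (h - 1))`. The averages of the `D_l` are `A(j N) / j`, and Hardy's inequality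
turns the bound into `∑ (A(j N) / j) ^ h = O(N ^ (h - 1))`, over `j ≤ N ^ (h - 1)`. As the harmonic
sum of this length is at least `(h - 1) log N`, some `j` has
`(A(j N) / j) ^ h = O(N ^ (h - 1) / (j log N))`, which is the claim at `x = j N`.
-/

/-- `A` is a `C_h[g]` set: there do not exist a set `X` of `h` integers and `g` pairwise
distinct integers `k_1, …, k_g` such that `X + k_i ⊆ A` for every `i`. -/
def IsChgSet (h g : ℕ) (A : Set ℤ) : Prop :=
  ¬ ∃ (X : Finset ℤ) (k : Fin g → ℤ), X.card = h ∧ Function.Injective k ∧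
      ∀ i : Fin g, ∀ x ∈ X, x + k i ∈ A

open Classical in
/-- The counting function `A(x) = |{a ∈ A : a ≤ x}|` of a set of positive integers. -/
noncomputable def countFn (A : Set ℤ) (x : ℕ) : ℕ :=
  ((Finset.Icc (1 : ℤ) x).filter (· ∈ A)).card

section Hardy

open Real

lemma rpow_sub_one_mul_le {p x y : ℝ} (hp : 1 < p) (hx : 0 ≤ x) (hy : 0 ≤ y) :
    p * (x ^ (p - 1) * y) ≤ (p - 1) * x ^ p + y ^ p := by
  have : 0 < p := by linarith
  have young := young_inequality_of_nonneg (rpow_nonneg hx (p - 1)) hy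
    (HolderConjugate.conjExponent hp).symm
  rw [conjExponent, ← rpow_mul hx, mul_div_cancel₀ p (by linarith : p - 1 ≠ 0)] at young
  calc p * (x ^ (p - 1) * y) ≤ p * (x ^ p / (p / (p - 1)) + y ^ p / p) := by gcongr
    _ = (p - 1) * x ^ p + y ^ p := by
      have : p - 1 ≠ 0 := by linarith
      field_simp

-- Here `x` and `y` stand for the averages of the first `n` and `n + 1` terms of a sequence, and `d`
-- for its last term; the terms `n * x ^ p` telescope.
lemma hardy_step {p q n x y d : ℝ} (hpq : p.HolderConjugate q) (hn : 0 ≤ n) (hx : 0 ≤ x)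
    (hy : 0 ≤ y) (hd : 0 ≤ d) (h : (n + 1) * y = n * x + d) :
    y ^ p + q * ((n + 1) * y ^ p) ≤ q ^ p * d ^ p + q * (n * x ^ p) := by
  have hq : 0 ≤ q := hpq.symm.nonneg
  have hyp : y ^ (p - 1) * y = y ^ p := by
    rw [← rpow_add_one' hy (by simpa using hpq.ne_zero), sub_add_cancel]
  have young_x := mul_le_mul_of_nonneg_left (rpow_sub_one_mul_le hpq.lt hy hx) (mul_nonneg hq hn)
  have young_d := rpow_sub_one_mul_le hpq.lt hy (mul_nonneg hq hd)
  have expand : p * q * ((n + 1) * y ^ p) =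
      q * n * (p * (y ^ (p - 1) * x)) + p * (y ^ (p - 1) * (q * d)) := by
    linear_combination p * q * y ^ (p - 1) * h - p * q * (n + 1) * hyp
  rw [mul_rpow hq hd] at young_d
  linear_combination young_x + young_d + expand - y ^ p * hpq.sub_one_mul_conj

theorem hardy_inequality {p q : ℝ} (hpq : p.HolderConjugate q) {a : ℕ → ℝ} (ha : ∀ n, 0 ≤ a n)
    (M : ℕ) :
    ∑ n ∈ Finset.range M, ((∑ i ∈ Finset.range (n + 1), a i) / (n + 1)) ^ p ≤
      q ^ p * ∑ n ∈ Finset.range M, a n ^ p := by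
  set m : ℕ → ℝ := fun n ↦ (∑ i ∈ Finset.range n, a i) / n with hm
  have hm0 (n : ℕ) : 0 ≤ m n := div_nonneg (Finset.sum_nonneg fun i _ ↦ ha i) n.cast_nonneg
  have hsum (n : ℕ) : n * m n = ∑ i ∈ Finset.range n, a i := by
    rcases eq_or_ne n 0 with rfl | hn
    · simp
    · exact mul_div_cancel₀ _ (Nat.cast_ne_zero.mpr hn)
  have recurrence (n : ℕ) : (n + 1 : ℝ) * m (n + 1) = n * m n + a n := by
    rw [hsum, ← Finset.sum_range_succ, ← hsum, Nat.cast_succ]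
  have telescoped : ∑ n ∈ Finset.range M, m (n + 1) ^ p + q * (M * m M ^ p) ≤
      q ^ p * ∑ n ∈ Finset.range M, a n ^ p := by
    induction M with
    | zero => simp
    | succ M ih =>
      have step := hardy_step hpq M.cast_nonneg (hm0 M) (hm0 (M + 1)) (ha M) (recurrence M)
      rw [Finset.sum_range_succ, Finset.sum_range_succ, Nat.cast_succ]
      linarith
  have boundary : 0 ≤ q * (M * m M ^ p) :=
    mul_nonneg hpq.symm.nonneg (mul_nonneg M.cast_nonneg (rpow_nonneg (hm0 M) p))
  simp only [hm, Nat.cast_succ] at telescoped boundary ⊢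
  linarith

theorem hardy_inequality_pow {h : ℕ} (hh : 2 ≤ h) {a : ℕ → ℝ} (ha : ∀ n, 0 ≤ a n) (M : ℕ) :
    ∑ n ∈ Finset.range M, ((∑ i ∈ Finset.range (n + 1), a i) / (n + 1)) ^ h ≤
      2 ^ h * ∑ n ∈ Finset.range M, a n ^ h := by
  have hh' : (2 : ℝ) ≤ h := by exact_mod_cast hh
  have hpq := HolderConjugate.conjExponent (p := h) (by linarith)
  have hq : conjExponent h ≤ 2 := by
    rw [conjExponent, div_le_iff₀ (by linarith)]
    linarith
  have hardy := hardy_inequality hpq ha M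
  simp only [rpow_natCast] at hardy
  refine hardy.trans (mul_le_mul_of_nonneg_right ?_ ?_)
  · exact pow_le_pow_left₀ hpq.symm.nonneg hq h
  · exact Finset.sum_nonneg fun n _ ↦ pow_nonneg (ha n) h

end Hardy

lemma exists_le_div_log_mul_inv_of_sum_le {f : ℕ → ℝ} {B : ℝ} {M : ℕ} (hM : 2 ≤ M) (hB : 0 ≤ B)
    (hf : ∑ l ∈ Finset.range M, f l ≤ B) : ∃ l < M, f l ≤ B / Real.log M * (l + 1 : ℝ)⁻¹ := by
  have hlog : 0 < Real.log M := Real.log_pos (by exact_mod_cast hM)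
  have log_le : Real.log M ≤ ∑ l ∈ Finset.range M, (l + 1 : ℝ)⁻¹ := by
    simpa [harmonic] using log_le_harmonic_floor (M : ℝ) M.cast_nonneg
  have sum_le : ∑ l ∈ Finset.range M, f l ≤
      ∑ l ∈ Finset.range M, B / Real.log M * (l + 1 : ℝ)⁻¹ :=
    calc ∑ l ∈ Finset.range M, f l ≤ B / Real.log M * Real.log M := by
          rwa [div_mul_cancel₀ B hlog.ne']
      _ ≤ B / Real.log M * ∑ l ∈ Finset.range M, (l + 1 : ℝ)⁻¹ := by gcongr
      _ = _ := Finset.mul_sum ..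
  simpa using Finset.exists_le_of_sum_le (Finset.nonempty_range_iff.mpr (by omega)) sum_le

lemma pow_le_two_mul_pow_mul_choose_add_one (h D : ℕ) :
    D ^ h ≤ (2 * h) ^ h * (D.choose h + 1) := by
  rcases le_or_gt D (2 * h) with hD | hD
  · calc D ^ h ≤ (2 * h) ^ h := Nat.pow_le_pow_left hD h
      _ ≤ (2 * h) ^ h * (D.choose h + 1) := Nat.le_mul_of_pos_right _ (Nat.succ_pos _)
  · calc D ^ h ≤ (2 * (D + 1 - h)) ^ h := Nat.pow_le_pow_left (by omega) h
      _ = 2 ^ h * (D + 1 - h) ^ h := mul_pow ..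
      _ ≤ 2 ^ h * D.descFactorial h := by gcongr; exact Nat.pow_sub_le_descFactorial D h
      _ = 2 ^ h * (h.factorial * D.choose h) := by rw [Nat.descFactorial_eq_factorial_mul_choose]
      _ ≤ 2 ^ h * (h ^ h * (D.choose h + 1)) := by
        gcongr
        · exact Nat.factorial_le_pow h
        · exact Nat.le_succ _
      _ = (2 * h) ^ h * (D.choose h + 1) := by rw [mul_pow, mul_assoc]

section Shape

open scoped Pointwise

/-- The translate of a finite set of integers whose least element is `0`: it represents the class
of the set modulo translations. The shape of `∅` is `∅`. -/
noncomputable def shape (S : Finset ℤ) : Finset ℤ :=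
  -sInf (S : Set ℤ) +ᵥ S

lemma mem_shape {S : Finset ℤ} {x : ℤ} : x ∈ shape S ↔ x + sInf (S : Set ℤ) ∈ S := by
  rw [shape, Finset.mem_neg_vadd_finset_iff, vadd_eq_add, add_comm]

lemma card_shape (S : Finset ℤ) : (shape S).card = S.card :=
  Finset.card_vadd_finset _ S

lemma zero_mem_shape {S : Finset ℤ} (hS : S.Nonempty) : 0 ∈ shape S := by
  rw [mem_shape, zero_add]
  exact hS.csInf_mem

lemma shape_subset_Ico {S : Finset ℤ} {d : ℤ} (hS : ∀ x ∈ S, ∀ y ∈ S, y < x + d) :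
    shape S ⊆ Finset.Ico 0 d := by
  intro x hx
  rw [mem_shape] at hx
  have hmin : sInf (S : Set ℤ) ≤ x + sInf (S : Set ℤ) := csInf_le S.bddBelow hx
  have hlt := hS _ (Finset.Nonempty.csInf_mem ⟨_, hx⟩) _ hx
  rw [Finset.mem_Ico]
  omega

lemma eq_of_shape_eq_of_sInf_eq {S T : Finset ℤ} (hshape : shape S = shape T)
    (hmin : sInf (S : Set ℤ) = sInf (T : Set ℤ)) : S = T :=
  vadd_left_cancel _ (hshape.trans (by rw [shape, hmin]))

end Shape

open Classical in
/-- The part of `A` in the block `(l * N, (l + 1) * N]`, the blocks being numbered from `0`;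
the `h`-subsets of `A` lying in a single block are the ones counted in the proof. -/
noncomputable def block (A : Set ℤ) (N l : ℕ) : Finset ℤ :=
  (Finset.Ioc ((l * N : ℕ) : ℤ) ((l + 1) * N : ℕ)).filter (· ∈ A)

section Block

variable {A : Set ℤ} {N l : ℕ}

lemma mem_block {x : ℤ} :
    x ∈ block A N l ↔ ((l * N : ℕ) < x ∧ x ≤ ((l + 1) * N : ℕ)) ∧ x ∈ A := by
  simp only [block, Finset.mem_filter, Finset.mem_Ioc]

lemma lt_add_of_mem_block {x y : ℤ} (hx : x ∈ block A N l) (hy : y ∈ block A N l) : y < x + N := by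
  have hx' := (mem_block.mp hx).1
  have hy' := (mem_block.mp hy).1
  rw [Nat.succ_mul] at hy'
  omega

open scoped Function in
lemma pairwise_disjoint_block (A : Set ℤ) (N : ℕ) : Pairwise (Disjoint on block A N) := by
  have hmono : Monotone fun l : ℕ ↦ ((l * N : ℕ) : ℤ) := fun i j hij ↦
    Nat.cast_le.mpr (Nat.mul_le_mul_right N hij)
  intro i j hij
  refine Finset.disjoint_left.mpr fun x hi hj ↦ ?_
  exact Set.disjoint_left.mp (hmono.pairwise_disjoint_on_Ioc_succ hij)
    (mem_block.mp hi).1 (mem_block.mp hj).1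

lemma countFn_mul (A : Set ℤ) (N j : ℕ) :
    countFn A (j * N) = ∑ l ∈ Finset.range j, (block A N l).card := by
  classical
  induction j with
  | zero => simp [countFn]
  | succ j ih =>
    have : j * N ≤ (j + 1) * N := Nat.mul_le_mul_right N j.le_succ
    have hdisj : Disjoint ((Finset.Icc (1 : ℤ) (j * N : ℕ)).filter (· ∈ A)) (block A N j) :=
      Finset.disjoint_left.mpr fun x hx hx' ↦ by
        have := Finset.mem_Icc.mp (Finset.mem_filter.mp hx).1
        have := (mem_block.mp hx').1
        omega
    rw [Finset.sum_range_succ, ← ih, countFn, countFn, ← Finset.card_union_of_disjoint hdisj]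
    congr 1
    ext x
    simp only [Finset.mem_union, Finset.mem_filter, Finset.mem_Icc, mem_block]
    grind

end Block

namespace IsChgSet

variable {h g : ℕ} {A : Set ℤ}

lemma card_lt_of_add_mem (hA : IsChgSet h g A) {X T : Finset ℤ} (hX : X.card = h)
    (hT : ∀ k ∈ T, ∀ x ∈ X, x + k ∈ A) : T.card < g := by
  by_contra! hg
  exact hA ⟨X, T.orderEmbOfCardLe hg, hX, (T.orderEmbOfCardLe hg).injective,
    fun i ↦ hT _ (T.orderEmbOfCardLe_mem hg i)⟩

lemma card_le_of_forall_shape_eq (hA : IsChgSet h g A) {X : Finset ℤ} (hX : X.card = h)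
    {F : Finset (Finset ℤ)} (hFA : ∀ S ∈ F, (S : Set ℤ) ⊆ A) (hFX : ∀ S ∈ F, shape S = X) :
    F.card ≤ g := by
  have hinj : Set.InjOn (fun S : Finset ℤ ↦ sInf (S : Set ℤ)) F := fun S hS T hT hmin ↦
    eq_of_shape_eq_of_sInf_eq ((hFX S hS).trans (hFX T hT).symm) hmin
  rw [← Finset.card_image_of_injOn hinj]
  refine (hA.card_lt_of_add_mem hX fun k hk x hx ↦ ?_).le
  obtain ⟨S, hS, rfl⟩ := Finset.mem_image.mp hk
  exact hFA S hS (mem_shape.mp (hFX S hS ▸ hx))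

theorem card_le_mul_pow_of_lt_add (hA : IsChgSet h g A) (hh : h ≠ 0) {N : ℕ} {F : Finset (Finset ℤ)}
    (hcard : ∀ S ∈ F, S.card = h) (hFA : ∀ S ∈ F, (S : Set ℤ) ⊆ A)
    (hdiam : ∀ S ∈ F, ∀ x ∈ S, ∀ y ∈ S, y < x + N) : F.card ≤ g * N ^ (h - 1) := by
  have hmaps : ∀ S ∈ F, (shape S).erase 0 ∈ (Finset.Ioo (0 : ℤ) N).powersetCard (h - 1) := by
    intro S hS
    have hne : S.Nonempty := Finset.card_ne_zero.mp (hcard S hS ▸ hh)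
    rw [Finset.mem_powersetCard, Finset.card_erase_of_mem (zero_mem_shape hne), card_shape,
      hcard S hS, ← Finset.Ico_erase_left]
    exact ⟨Finset.erase_subset_erase 0 (shape_subset_Ico (hdiam S hS)), rfl⟩
  have hfiber : ∀ Y ∈ (Finset.Ioo (0 : ℤ) N).powersetCard (h - 1),
      (F.filter fun S ↦ (shape S).erase 0 = Y).card ≤ g := by
    intro Y hY
    obtain ⟨hY, hYcard⟩ := Finset.mem_powersetCard.mp hY
    have hY0 : (0 : ℤ) ∉ Y := fun h0 ↦ (Finset.mem_Ioo.mp (hY h0)).1.false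
    refine hA.card_le_of_forall_shape_eq (X := insert 0 Y) ?_ ?_ ?_
    · rw [Finset.card_insert_of_notMem hY0, hYcard, Nat.sub_add_cancel (Nat.pos_of_ne_zero hh)]
    · exact fun S hS ↦ hFA S (Finset.mem_filter.mp hS).1
    · intro S hS
      obtain ⟨hSF, rfl⟩ := Finset.mem_filter.mp hS
      have hne : S.Nonempty := Finset.card_ne_zero.mp (hcard S hSF ▸ hh)
      exact (Finset.insert_erase (zero_mem_shape hne)).symm
  calc F.card ≤ g * ((Finset.Ioo (0 : ℤ) N).powersetCard (h - 1)).card :=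
        Finset.card_le_mul_card_image_of_maps_to hmaps g hfiber
    _ ≤ g * N ^ (h - 1) := by
      rw [Finset.card_powersetCard, Int.card_Ioo]
      gcongr
      exact (Nat.choose_le_pow _ _).trans (Nat.pow_le_pow_left (by omega) _)

lemma sum_choose_card_block_le (hA : IsChgSet h g A) (hh : h ≠ 0) (N M : ℕ) :
    ∑ l ∈ Finset.range M, (block A N l).card.choose h ≤ g * N ^ (h - 1) := by
  have hdisj : (Finset.range M : Set ℕ).PairwiseDisjoint
      fun l ↦ (block A N l).powersetCard h := by
    refine fun i _ j _ hij ↦ Finset.disjoint_left.mpr fun S hi hj ↦ hh ?_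
    obtain ⟨hi, hcard⟩ := Finset.mem_powersetCard.mp hi
    have hS : S = ∅ := disjoint_self.mp
      ((pairwise_disjoint_block A N hij).mono hi (Finset.mem_powersetCard.mp hj).1)
    rw [← hcard, hS, Finset.card_empty]
  simp only [← Finset.card_powersetCard]
  rw [← Finset.card_biUnion hdisj]
  have hmem : ∀ S ∈ (Finset.range M).biUnion fun l ↦ (block A N l).powersetCard h,
      ∃ l, S ⊆ block A N l ∧ S.card = h := fun S hS ↦ by
    obtain ⟨l, -, hS⟩ := Finset.mem_biUnion.mp hS
    exact ⟨l, Finset.mem_powersetCard.mp hS⟩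
  refine hA.card_le_mul_pow_of_lt_add hh ?_ ?_ ?_ <;> intro S hS <;>
    obtain ⟨l, hSl, hcard⟩ := hmem S hS
  · exact hcard
  · exact fun x hx ↦ (mem_block.mp (hSl hx)).2
  · exact fun x hx y hy ↦ lt_add_of_mem_block (hSl hx) (hSl hy)

lemma sum_card_block_pow_le (hA : IsChgSet h g A) (hh : h ≠ 0) (N M : ℕ) :
    ∑ l ∈ Finset.range M, (block A N l).card ^ h ≤ (2 * h) ^ h * (g * N ^ (h - 1) + M) :=
  calc ∑ l ∈ Finset.range M, (block A N l).card ^ h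
    _ ≤ ∑ l ∈ Finset.range M, (2 * h) ^ h * ((block A N l).card.choose h + 1) :=
      Finset.sum_le_sum fun l _ ↦ pow_le_two_mul_pow_mul_choose_add_one h _
    _ = (2 * h) ^ h * (∑ l ∈ Finset.range M, (block A N l).card.choose h + M) := by
      rw [← Finset.mul_sum, Finset.sum_add_distrib, Finset.sum_const, Finset.card_range,
        smul_eq_mul, mul_one]
    _ ≤ (2 * h) ^ h * (g * N ^ (h - 1) + M) := by
      gcongr
      exact hA.sum_choose_card_block_le hh N M

theorem sum_countFn_div_pow_le (hA : IsChgSet h g A) (hh : 2 ≤ h) (N M : ℕ) :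
    ∑ l ∈ Finset.range M, ((countFn A ((l + 1) * N) : ℝ) / (l + 1)) ^ h ≤
      (4 * h) ^ h * (g * N ^ (h - 1) + M) := by
  have hblocks : ∑ l ∈ Finset.range M, ((block A N l).card : ℝ) ^ h ≤
      (2 * h) ^ h * (g * N ^ (h - 1) + M) := by
    exact_mod_cast hA.sum_card_block_pow_le (by omega) N M
  calc ∑ l ∈ Finset.range M, ((countFn A ((l + 1) * N) : ℝ) / (l + 1)) ^ h
    _ = ∑ l ∈ Finset.range M,
        ((∑ i ∈ Finset.range (l + 1), ((block A N i).card : ℝ)) / (l + 1)) ^ h := by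
      simp only [countFn_mul, Nat.cast_sum]
    _ ≤ 2 ^ h * ∑ l ∈ Finset.range M, ((block A N l).card : ℝ) ^ h :=
      hardy_inequality_pow hh (fun _ ↦ Nat.cast_nonneg _) M
    _ ≤ 2 ^ h * ((2 * h) ^ h * (g * N ^ (h - 1) + M)) := by gcongr
    _ = (4 * h) ^ h * (g * N ^ (h - 1) + M) := by
      rw [← mul_assoc, ← mul_pow]
      ring

theorem exists_countFn_pow_le (hA : IsChgSet h g A) (hh : 2 ≤ h) {N : ℕ} (hN : 2 ≤ N) :
    ∃ x ∈ Set.Icc N (N ^ h),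
      (countFn A x : ℝ) ^ h ≤ 2 * ((4 * h) ^ h * (g + 1)) * (x ^ (h - 1) / Real.log x) := by
  obtain ⟨k, rfl⟩ : ∃ k, h = k + 1 := ⟨h - 1, by omega⟩
  have hk : (1 : ℝ) ≤ k := by exact_mod_cast (by omega : 1 ≤ k)
  have hM : 2 ≤ N ^ k := hN.trans (Nat.le_self_pow (by omega) N)
  have hlogN : 0 < Real.log N := Real.log_pos (by exact_mod_cast hN)
  obtain ⟨l, hl, hle⟩ := exists_le_div_log_mul_inv_of_sum_le hM (by positivity)
    (hA.sum_countFn_div_pow_le hh N (N ^ k))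
  have hx : (l + 1) * N ∈ Set.Icc N (N ^ (k + 1)) :=
    ⟨Nat.le_mul_of_pos_left N l.succ_pos, pow_succ N k ▸ Nat.mul_le_mul_right N hl⟩
  refine ⟨(l + 1) * N, hx, ?_⟩
  set x := (l + 1) * N with hxdef
  have hx1 : 1 < x := lt_of_lt_of_le hN hx.1
  have hlogx : 0 < Real.log x := Real.log_pos (by exact_mod_cast hx1)
  have hlog_le : Real.log x ≤ 2 * (k * Real.log N) :=
    calc Real.log x ≤ Real.log ((N : ℝ) ^ (k + 1)) :=
          Real.log_le_log (by positivity) (by exact_mod_cast hx.2)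
      _ = (k + 1) * Real.log N := by rw [Real.log_pow, Nat.cast_succ]
      _ ≤ 2 * (k * Real.log N) := by nlinarith
  have hcast : (x : ℝ) = (l + 1) * N := by rw [hxdef]; push_cast; rfl
  rw [div_pow, div_le_iff₀ (by positivity), Nat.cast_pow, Real.log_pow, Nat.add_sub_cancel] at hle
  rw [Nat.add_sub_cancel]
  calc (countFn A x : ℝ) ^ (k + 1)
    _ ≤ (4 * (k + 1 : ℕ)) ^ (k + 1) * (g * N ^ k + N ^ k) / (k * Real.log N) * (l + 1 : ℝ)⁻¹ *
        (l + 1) ^ (k + 1) := hle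
    _ = 2 * ((4 * (k + 1 : ℕ)) ^ (k + 1) * (g + 1)) * (x ^ k / (2 * (k * Real.log N))) := by
      rw [hcast, mul_pow _ (N : ℝ), pow_succ (l + 1 : ℝ)]
      field_simp
    _ ≤ 2 * ((4 * (k + 1 : ℕ)) ^ (k + 1) * (g + 1)) * (x ^ k / Real.log x) := by gcongr

end IsChgSet

lemma rpow_mul_log_rpow_pow {h : ℕ} (hh : h ≠ 0) {x : ℝ} (hx : 1 ≤ x) :
    (x ^ (1 - (1 : ℝ) / h) * Real.log x ^ (-(1 : ℝ) / h)) ^ h = x ^ (h - 1) / Real.log x := by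
  have hh' : (h : ℝ) ≠ 0 := Nat.cast_ne_zero.mpr hh
  have hexp : (1 - (1 : ℝ) / h) * h = (h - 1 : ℕ) := by
    rw [Nat.cast_pred (Nat.pos_of_ne_zero hh)]
    field_simp
  rw [mul_pow, ← Real.rpow_mul_natCast (by positivity),
    ← Real.rpow_mul_natCast (Real.log_nonneg hx), hexp, div_mul_cancel₀ _ hh', Real.rpow_natCast,
    Real.rpow_neg_one, div_eq_mul_inv]

theorem stmt2_general {g h : ℕ} (hh : 2 ≤ h) {A : Set ℤ} (hA : IsChgSet h g A) {N : ℕ}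
    (hN : 2 ≤ N) : ∃ x ∈ Set.Icc N (N ^ h), (countFn A x : ℝ) ≤
      (8 * h * (g + 1) : ℝ) * (x : ℝ) ^ (1 - (1 : ℝ) / h) * (Real.log x) ^ (-(1 : ℝ) / h) := by
  obtain ⟨x, hx, hle⟩ := hA.exists_countFn_pow_le hh hN
  have hh0 : h ≠ 0 := by omega
  have hx1 : (1 : ℝ) ≤ x := by exact_mod_cast (one_le_two.trans hN).trans hx.1
  have : 0 ≤ Real.log x := Real.log_nonneg hx1
  have hconst : 2 * ((4 * h) ^ h * (g + 1)) ≤ (8 * h * (g + 1) : ℝ) ^ h :=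
    calc 2 * ((4 * h) ^ h * (g + 1) : ℝ) ≤ 2 ^ h * ((4 * h) ^ h * (g + 1) ^ h) := by
          gcongr
          · exact le_self_pow₀ one_le_two hh0
          · exact le_self_pow₀ (by linarith [g.cast_nonneg (α := ℝ)]) hh0
      _ = (8 * h * (g + 1) : ℝ) ^ h := by
        rw [← mul_pow, ← mul_pow]
        ring
  refine ⟨x, hx, le_of_pow_le_pow_left₀ hh0 (by positivity) ?_⟩
  calc (countFn A x : ℝ) ^ h ≤ 2 * ((4 * h) ^ h * (g + 1)) * (x ^ (h - 1) / Real.log x) := hle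
    _ ≤ (8 * h * (g + 1) : ℝ) ^ h * (x ^ (h - 1) / Real.log x) := by gcongr
    _ = (8 * h * (g + 1) * x ^ (1 - (1 : ℝ) / h) * Real.log x ^ (-(1 : ℝ) / h)) ^ h := by
      rw [mul_assoc _ (_ ^ _), mul_pow _ (_ * _), rpow_mul_log_rpow_pow hh0 hx1]

theorem stmt2 (g h : ℕ) (hgh : h ≤ g) (hh : 2 ≤ h) :
    ∃ C : ℝ, 0 < C ∧ ∀ A : Set ℤ, (∀ a ∈ A, 0 < a) → A.Infinite → IsChgSet h g A →
      ∀ x₀ : ℕ, ∃ x : ℕ, x₀ ≤ x ∧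
        (countFn A x : ℝ) ≤
          C * (x : ℝ) ^ (1 - (1 : ℝ) / h) * (Real.log x) ^ (-(1 : ℝ) / h) := by
  refine ⟨8 * h * (g + 1), by positivity, fun A _ _ hA x₀ ↦ ?_⟩
  obtain ⟨x, hx, hle⟩ := stmt2_general hh hA (le_max_left 2 x₀)
  exact ⟨x, (le_max_right 2 x₀).trans hx.1, hle⟩
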